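/- The shearlet synthesis operator S^t_ψ is a continuous linear map from the space S(S) into the Lizorkin space S_0(R²): for every Φ ∈ S(S) the function S^t_ψ Φ belongs to S_0(R²), and for every ν ∈ N there exist indices k1,k2,l,m,α1,α2,β,γ ∈ N and a constant C > 0 such that ρ_ν(S^t_ψ Φ) ≤ C p^{α1,α2,β,γ}_{k1,k2,l,m}(Φ) for all Φ ∈ S(S). -/

import Mathlib

/-!
The operator is an integral over the shearlet group of the functions `S_{b,s,a}ψ` against `Φ`.
The weight `w = ⟨b₁⟩⟨b₂⟩⟨s⟩(|a| + |a|⁻¹)` controls the linear map `A_a⁻¹ S_s⁻¹`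
(`norm_shearMap_le`), its inverse and the translation (`one_add_norm_le`), and the density of the
measure (`abs_rpow_le`). Thus `(1 + ‖x‖)^N` times any `x`-derivative of order `n` of `S_{b,s,a}ψ`
grows at most like a power of `w`, whereas `Φ` decays faster than every power of `w`
(`norm_mul_grpWeight_pow_le`), and `w⁻²` is integrable. So one may differentiate under the integral
sign to all orders (`contDiff_integral_of_bound`), which gives smoothness, rapid decay and the
seminorm estimate `synthOp_rho_le`. All derivatives fall on `ψ`, so seminorms of `Φ` without
derivatives suffice, with one common exponent.

For the vanishing moments, Fubini and an affine change of variables reduce the claim to the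
vanishing of the moments of `ψ` (`synthOp_moments`, `shearlet_moments_eq_zero`). For fixed `v`, the
function `t ↦ Fψ(t, v t) = |t|⁻¹ Fχ₁(t) φ₂(v)` is flat at `t = 0` because all moments of `χ₁`
vanish; comparing with its Taylor expansion shows `∫ (x₁ + v x₂)^n ψ(x) dx = 0` for all `v` and
`n` (`line_moments_eq_zero`). This is a polynomial in `v`, and its coefficients are nonzero
multiples of the moments of `ψ` of degree `n` (`moments_eq_zero_of_line_moments`).
-/


open MeasureTheory Complex SchwartzMap

noncomputable section

/-- The 1D Fourier transform `Fφ(ξ) = ∫ φ(x) e^{−2πi ξ x} dx`. -/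
def FT1 (f : ℝ → ℂ) (ξ : ℝ) : ℂ :=
  ∫ x : ℝ, Complex.exp (-2 * (Real.pi : ℂ) * Complex.I * (ξ * x)) * f x

/-- The 2D Fourier transform `Fφ(ξ) = ∫ φ(x) e^{−2πi ξ·x} dx` on `ℝ × ℝ`. -/
def FT2 (f : ℝ × ℝ → ℂ) (ξ : ℝ × ℝ) : ℂ :=
  ∫ x : ℝ × ℝ,
    Complex.exp (-2 * (Real.pi : ℂ) * Complex.I * (ξ.1 * x.1 + ξ.2 * x.2)) * f x

/-- `S_{b,s,a}ψ(x) = |a|^{-3/4} ψ(A_a⁻¹ S_s⁻¹ (x − b))`, where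
`S_s = [[1,−s],[0,1]]` and `A_a = a·diag(1,|a|^{−1/2})`. -/
def shearletFn (ψ : ℝ × ℝ → ℂ) (b1 b2 s a : ℝ) (x : ℝ × ℝ) : ℂ :=
  ((|a| ^ (-(3 : ℝ)/4) : ℝ) : ℂ) *
    ψ (((x.1 - b1) + s * (x.2 - b2)) / a, Real.sqrt |a| * (x.2 - b2) / a)

/-- The shearlet transform `S_ψ f(b,s,a) = ∫ f(x) conj (S_{b,s,a}ψ(x)) dx`. -/
def shearTrans (ψ f : ℝ × ℝ → ℂ) (b1 b2 s a : ℝ) : ℂ :=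
  ∫ x : ℝ × ℝ, f x * (starRingEnd ℂ) (shearletFn ψ b1 b2 s a x)

/-- The 1D wavelet transform `W_χ g(b,a) = ∫ g(x) |a|^{-1/2} conj (χ((x−b)/a)) dx`. -/
def waveletTrans (χ g : ℝ → ℂ) (b a : ℝ) : ℂ :=
  ∫ x : ℝ, g x * (starRingEnd ℂ) (((|a| ^ (-(1 : ℝ)/2) : ℝ) : ℂ) * χ ((x - b) / a))

/-- The affine Radon transform `R^aff f(v,t) = ∫ f(t − vy, y) dy`. -/
def radonAff (f : ℝ × ℝ → ℂ) (v t : ℝ) : ℂ :=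
  ∫ y : ℝ, f (t - v * y, y)

/-- The polar Radon transform
`R^pol f(θ,q) = ∫ f(q cos θ − y sin θ, q sin θ + y cos θ) dy`. -/
def radonPol (f : ℝ × ℝ → ℂ) (θ q : ℝ) : ℂ :=
  ∫ y : ℝ, f (q * Real.cos θ - y * Real.sin θ, q * Real.sin θ + y * Real.cos θ)

/-- The ridgelet transform `R_χ f(θ,b,a) = ∫ f(x) conj (a⁻¹ χ((x·n(θ) − b)/a)) dx`. -/
def ridgeTrans (χ : ℝ → ℂ) (f : ℝ × ℝ → ℂ) (θ b a : ℝ) : ℂ :=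
  ∫ x : ℝ × ℝ,
    f x * (starRingEnd ℂ) (((a : ℂ))⁻¹ *
      χ ((x.1 * Real.cos θ + x.2 * Real.sin θ - b) / a))

/-- The shearlet synthesis operator
`S^t_ψ Φ(x) = ∫∫∫ Φ(b,s,a) S_{b,s,a}ψ(x) db ds da/|a|³`. -/
def synthOp (ψ : ℝ × ℝ → ℂ) (Φ : ℝ → ℝ → ℝ → ℝ → ℂ) (x : ℝ × ℝ) : ℂ :=
  ∫ q : (ℝ × ℝ) × ℝ × ℝ,
    ((|q.2.2| ^ 3)⁻¹ : ℝ) •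
      (Φ q.1.1 q.1.2 q.2.1 q.2.2 * shearletFn ψ q.1.1 q.1.2 q.2.1 q.2.2 x)

/-- Partial derivative in the first slot `b₁`. -/
def sderiv1 (Φ : ℝ → ℝ → ℝ → ℝ → ℂ) : ℝ → ℝ → ℝ → ℝ → ℂ :=
  fun b1 b2 s a => deriv (fun t => Φ t b2 s a) b1

/-- Partial derivative in the second slot `b₂`. -/
def sderiv2 (Φ : ℝ → ℝ → ℝ → ℝ → ℂ) : ℝ → ℝ → ℝ → ℝ → ℂ :=
  fun b1 b2 s a => deriv (fun t => Φ b1 t s a) b2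

/-- Partial derivative in the third slot `s`. -/
def sderiv3 (Φ : ℝ → ℝ → ℝ → ℝ → ℂ) : ℝ → ℝ → ℝ → ℝ → ℂ :=
  fun b1 b2 s a => deriv (fun t => Φ b1 b2 t a) s

/-- Partial derivative in the fourth slot `a`. -/
def sderiv4 (Φ : ℝ → ℝ → ℝ → ℝ → ℂ) : ℝ → ℝ → ℝ → ℝ → ℂ :=
  fun b1 b2 s a => deriv (fun t => Φ b1 b2 s t) a

/-- `∂_a^γ ∂_s^β ∂_{b₂}^{α₂} ∂_{b₁}^{α₁} Φ`. -/
def shearDeriv (α1 α2 β γ : ℕ) (Φ : ℝ → ℝ → ℝ → ℝ → ℂ) : ℝ → ℝ → ℝ → ℝ → ℂ :=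
  sderiv4^[γ] (sderiv3^[β] (sderiv2^[α2] (sderiv1^[α1] Φ)))

/-- The japanese bracket `⟨x⟩ = (1+x²)^{1/2}`. -/
def jb (x : ℝ) : ℝ := Real.sqrt (1 + x ^ 2)

/-- The seminorms `p^{α1,α2,β,γ}_{k1,k2,l,m}` of the space `𝒮(𝕊)`,
`𝕊 = ℝ² × ℝ × ℝˣ`. -/
def shearSeminorm (k1 k2 l m α1 α2 β γ : ℕ) (Φ : ℝ → ℝ → ℝ → ℝ → ℂ) : ℝ :=
  ⨆ q : ℝ × ℝ × ℝ × {x : ℝ // x ≠ 0},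
    jb q.1 ^ k1 * jb q.2.1 ^ k2 * jb q.2.2.1 ^ l *
      (|q.2.2.2.1| ^ m + (|q.2.2.2.1| ^ m)⁻¹) *
      ‖shearDeriv α1 α2 β γ Φ q.1 q.2.1 q.2.2.1 q.2.2.2.1‖

/-- Membership in the space `𝒮(𝕊)` of highly localized functions on
`𝕊 = ℝ² × ℝ × ℝˣ`: smoothness on `{a ≠ 0}` together with the finiteness of all
the seminorms `p^{α1,α2,β,γ}_{k1,k2,l,m}`. -/
def HLocalized (Φ : ℝ → ℝ → ℝ → ℝ → ℂ) : Prop :=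
  ContDiffOn ℝ (⊤ : ℕ∞) (fun p : ℝ × ℝ × ℝ × ℝ => Φ p.1 p.2.1 p.2.2.1 p.2.2.2)
      {p : ℝ × ℝ × ℝ × ℝ | p.2.2.2 ≠ 0} ∧
    ∀ k1 k2 l m α1 α2 β γ : ℕ, ∃ C : ℝ, ∀ b1 b2 s a : ℝ, a ≠ 0 →
      jb b1 ^ k1 * jb b2 ^ k2 * jb s ^ l * (|a| ^ m + (|a| ^ m)⁻¹) *
        ‖shearDeriv α1 α2 β γ Φ b1 b2 s a‖ ≤ C

/-- Partial derivative `∂_{x₁}` on `ℝ × ℝ`. -/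
def pdx (f : ℝ × ℝ → ℂ) : ℝ × ℝ → ℂ := fun p => deriv (fun t => f (t, p.2)) p.1

/-- Partial derivative `∂_{x₂}` on `ℝ × ℝ`. -/
def pdy (f : ℝ × ℝ → ℂ) : ℝ × ℝ → ℂ := fun p => deriv (fun t => f (p.1, t)) p.2

/-- The Schwartz seminorms `ρ_ν(φ) = sup_{x,|m|≤ν} ⟨x⟩^ν |∂^m φ(x)|` on `𝒮(ℝ²)`. -/
def schwartzRho (ν : ℕ) (f : ℝ × ℝ → ℂ) : ℝ :=
  ⨆ q : (ℝ × ℝ) × {m : ℕ × ℕ // m.1 + m.2 ≤ ν},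
    Real.sqrt (1 + q.1.1 ^ 2 + q.1.2 ^ 2) ^ ν *
      ‖pdx^[q.2.1.1] (pdy^[q.2.1.2] f) q.1‖

/-- Vanishing moments on `ℝ²`: `∫ x^m f(x) dx = 0` for all multi-indices `m ∈ ℕ²`,
i.e. membership of a Schwartz function in the Lizorkin space `𝒮₀(ℝ²)`. -/
def VanishingMoments2 (f : ℝ × ℝ → ℂ) : Prop :=
  ∀ m : ℕ × ℕ, ∫ x : ℝ × ℝ, (x.1 : ℂ) ^ m.1 * (x.2 : ℂ) ^ m.2 * f x = 0

/-! ### Differentiation under the integral sign -/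

/-- Differentiation under the integral sign to all orders, for a parameter-dependent integrand whose
derivatives of each order have an integrable bound uniform in the parameter. -/
theorem contDiff_integral_of_bound {X E : Type*} [MeasurableSpace X] {μ : Measure X}
    [NormedAddCommGroup E] [NormedSpace ℝ E] {k : X → E → ℂ} {B : ℕ → X → ℝ}
    (hk : ∀ᵐ q ∂μ, ContDiff ℝ (⊤ : ℕ∞) (k q))
    (hmeas : ∀ n x, AEStronglyMeasurable (fun q => iteratedFDeriv ℝ n (k q) x) μ)
    (hB : ∀ n, Integrable (B n) μ)
    (hbound : ∀ n, ∀ᵐ q ∂μ, ∀ x, ‖iteratedFDeriv ℝ n (k q) x‖ ≤ B n q) :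
    ContDiff ℝ (⊤ : ℕ∞) (fun x => ∫ q, k q x ∂μ) ∧
      ∀ n x, iteratedFDeriv ℝ n (fun x => ∫ q, k q x ∂μ) x
        = ∫ q, iteratedFDeriv ℝ n (k q) x ∂μ := by
  have hInt : ∀ n x, Integrable (fun q => iteratedFDeriv ℝ n (k q) x) μ := fun n x =>
    (hB n).mono' (hmeas n x) ((hbound n).mono fun q hq => hq x)
  have hder : ∀ n x, HasFDerivAt (fun x => ∫ q, iteratedFDeriv ℝ n (k q) x ∂μ)
      (∫ q, iteratedFDeriv ℝ (n + 1) (k q) x ∂μ).curryLeft x := by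
    intro n x
    let T : (E [×(n+1)]→L[ℝ] ℂ) →L[ℝ] (E →L[ℝ] E [×n]→L[ℝ] ℂ) :=
      (continuousMultilinearCurryLeftEquiv ℝ (fun _ : Fin (n + 1) => E) ℂ
        ).toContinuousLinearEquiv.toContinuousLinearMap
    have hT : ∀ q y, T (iteratedFDeriv ℝ (n + 1) (k q) y)
        = fderiv ℝ (iteratedFDeriv ℝ n (k q)) y := by
      intro q y
      simp only [fderiv_iteratedFDeriv, Function.comp_apply]
      rfl
    have e : (∫ q, iteratedFDeriv ℝ (n + 1) (k q) x ∂μ).curryLeft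
        = ∫ q, fderiv ℝ (iteratedFDeriv ℝ n (k q)) x ∂μ := by
      have := (ContinuousLinearMap.integral_comp_comm (𝕜 := ℝ)
        (Fₗ := E →L[ℝ] E [×n]→L[ℝ] ℂ) T (hInt (n + 1) x)).symm
      simp only [hT] at this
      exact this
    rw [e]
    refine hasFDerivAt_integral_of_dominated_of_fderiv_le (𝕜 := ℝ) (s := Set.univ)
      (bound := B (n + 1)) (F' := fun x q => fderiv ℝ (iteratedFDeriv ℝ n (k q)) x)
      Filter.univ_mem (.of_forall fun y => hmeas n y) (hInt n x) ?_ ?_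
      (hB _) ?_
    · have := T.continuous.comp_aestronglyMeasurable (hmeas (n + 1) x)
      simpa only [hT] using this
    · filter_upwards [hbound (n + 1)] with q hq y _
      rw [norm_fderiv_iteratedFDeriv]
      exact hq y
    · filter_upwards [hk] with q hq y _
      exact ((hq.differentiable_iteratedFDeriv (m := n)
        (by exact_mod_cast WithTop.coe_lt_top n)) y).hasFDerivAt
  have hT : HasFTaylorSeriesUpTo ((⊤ : ℕ∞) : WithTop ℕ∞) (fun x => ∫ q, k q x ∂μ)
      (fun x n => ∫ q, iteratedFDeriv ℝ n (k q) x ∂μ) := by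
    refine ⟨fun x => ?_, fun n _ x => hder n x, fun n _ => ?_⟩
    · let T : (E [×0]→L[ℝ] ℂ) →L[ℝ] ℂ :=
        (continuousMultilinearCurryFin0 ℝ E ℂ).toContinuousLinearEquiv.toContinuousLinearMap
      exact (T.integral_comp_comm (hInt 0 x)).symm
    · exact continuous_iff_continuousAt.2 fun x => (hder n x).continuousAt
  refine ⟨hT.contDiff, fun n x => (hT.eq_iteratedFDeriv (by exact_mod_cast le_top) x).symm⟩

/-! ### The affine maps of the shearlet group and the weight on the parameter space -/

/-- The linear map `A_a⁻¹ S_s⁻¹`. -/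
def shearMap (s a : ℝ) : ℝ × ℝ →L[ℝ] ℝ × ℝ :=
  a⁻¹ • (ContinuousLinearMap.inl ℝ ℝ ℝ ∘L ContinuousLinearMap.fst ℝ ℝ ℝ) +
  (s / a) • (ContinuousLinearMap.inl ℝ ℝ ℝ ∘L ContinuousLinearMap.snd ℝ ℝ ℝ) +
  (Real.sqrt |a| / a) • (ContinuousLinearMap.inr ℝ ℝ ℝ ∘L ContinuousLinearMap.snd ℝ ℝ ℝ)

theorem shearMap_apply (s a : ℝ) (z : ℝ × ℝ) :
    shearMap s a z = ((z.1 + s * z.2) / a, Real.sqrt |a| * z.2 / a) := by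
  ext
  · simp [shearMap]; ring
  · simp [shearMap]; ring

/-- The part of the integrand of `synthOp` that does not depend on `x`. -/
def synthCoef (Φ : ℝ → ℝ → ℝ → ℝ → ℂ) (q : (ℝ × ℝ) × ℝ × ℝ) : ℂ :=
  ((((|q.2.2| ^ 3)⁻¹ * |q.2.2| ^ (-(3 : ℝ)/4) : ℝ)) : ℂ) * Φ q.1.1 q.1.2 q.2.1 q.2.2

theorem synthOp_eq (ψ : ℝ × ℝ → ℂ) (Φ : ℝ → ℝ → ℝ → ℝ → ℂ) :
    synthOp ψ Φ = fun x => ∫ q : (ℝ × ℝ) × ℝ × ℝ,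
      synthCoef Φ q * ψ (shearMap q.2.1 q.2.2 (x - q.1)) := by
  ext x
  refine integral_congr_ae (.of_forall fun q => ?_)
  simp only [shearletFn, synthCoef, shearMap_apply, Prod.fst_sub, Prod.snd_sub, real_smul]
  push_cast
  ring

/-- A weight on `𝕊` with values in `[1, ∞)` that dominates, up to powers, every quantity of
polynomial growth in `b₁, b₂, s, a, a⁻¹`. -/
def grpWeight (q : (ℝ × ℝ) × ℝ × ℝ) : ℝ :=
  jb q.1.1 * jb q.1.2 * jb q.2.1 * (|q.2.2| + |q.2.2|⁻¹)

theorem one_le_jb (x : ℝ) : 1 ≤ jb x := by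
  unfold jb; rw [Real.one_le_sqrt]; nlinarith [sq_nonneg x]

theorem abs_le_jb (x : ℝ) : |x| ≤ jb x := by
  unfold jb; apply Real.abs_le_sqrt; linarith

theorem jb_sq (x : ℝ) : jb x ^ 2 = 1 + x ^ 2 := Real.sq_sqrt (by positivity)

theorem jb_sq_le {a : ℝ} (ha : a ≠ 0) : 1 + a ^ 2 ≤ (|a| + |a|⁻¹) ^ 2 := by
  have h : |a| ≠ 0 := abs_ne_zero.2 ha
  have : (|a| + |a|⁻¹) ^ 2 = |a| ^ 2 + 2 + (|a|⁻¹) ^ 2 := by field_simp; ring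
  rw [this, sq_abs]; nlinarith [sq_nonneg (|a|⁻¹)]

theorem jb_le_add_inv {a : ℝ} (ha : a ≠ 0) : jb a ≤ |a| + |a|⁻¹ := by
  rw [jb, Real.sqrt_le_left (by positivity)]
  exact jb_sq_le ha

theorem grpWeight_factors {b1 b2 s a : ℝ} (ha : a ≠ 0) :
    1 ≤ grpWeight ((b1, b2), s, a) ∧ |b1| ≤ grpWeight ((b1, b2), s, a) ∧
    |b2| ≤ grpWeight ((b1, b2), s, a) ∧ |a| + |a|⁻¹ ≤ grpWeight ((b1, b2), s, a) ∧
    jb s * (|a| + |a|⁻¹) ≤ grpWeight ((b1, b2), s, a) := by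
  have h1 := one_le_jb b1
  have h2 := one_le_jb b2
  have h3 := one_le_jb s
  have h4 : 1 ≤ |a| + |a|⁻¹ := (one_le_jb a).trans (jb_le_add_inv ha)
  have g1 := abs_le_jb b1
  have g2 := abs_le_jb b2
  simp only [grpWeight]
  set u := |a| + |a|⁻¹
  have h12 : jb b1 ≤ jb b1 * jb b2 := le_mul_of_one_le_right (by linarith) h2
  have h12' : jb b2 ≤ jb b1 * jb b2 := le_mul_of_one_le_left (by linarith) h1
  have h34 : jb s ≤ jb s * u := le_mul_of_one_le_right (by linarith) h4
  have h34' : u ≤ jb s * u := le_mul_of_one_le_left (by linarith) h3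
  rw [mul_assoc (jb b1 * jb b2)]
  have A : jb b1 * jb b2 ≤ jb b1 * jb b2 * (jb s * u) :=
    le_mul_of_one_le_right (by linarith) (by linarith)
  have B : jb s * u ≤ jb b1 * jb b2 * (jb s * u) :=
    le_mul_of_one_le_left (by linarith) (by linarith)
  exact ⟨by linarith, by linarith, by linarith, by linarith, B⟩

theorem sqrt_abs_div_le {a : ℝ} (ha : a ≠ 0) : Real.sqrt |a| / |a| ≤ |a| + |a|⁻¹ := by
  have h : 0 < |a| := abs_pos.2 ha
  rw [div_le_iff₀ h, Real.sqrt_le_left (by positivity)]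
  have : (|a| + |a|⁻¹) * |a| = |a| ^ 2 + 1 := by field_simp
  rw [this]
  nlinarith [sq_nonneg (|a| ^ 2), sq_nonneg (|a| - 1), sq_nonneg |a|]

theorem sqrt_abs_le {a : ℝ} (ha : a ≠ 0) : Real.sqrt |a| ≤ |a| + |a|⁻¹ := by
  have h : 0 < |a| := abs_pos.2 ha
  rw [Real.sqrt_le_left (by positivity)]
  have := jb_sq_le ha
  rw [← sq_abs] at this
  nlinarith [sq_nonneg (|a| - 1)]

theorem norm_shearMap_le (q : (ℝ × ℝ) × ℝ × ℝ) (ha : q.2.2 ≠ 0) :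
    ‖shearMap q.2.1 q.2.2‖ ≤ 2 * grpWeight q := by
  obtain ⟨⟨b1, b2⟩, s, a⟩ := q
  obtain ⟨w1, w2, w3, w4, w5⟩ := grpWeight_factors (b1 := b1) (b2 := b2) (s := s) ha
  set w := grpWeight ((b1, b2), s, a)
  simp only at ha ⊢
  have h : 0 < |a| := abs_pos.2 ha
  refine ContinuousLinearMap.opNorm_le_bound _ (by linarith) fun z => ?_
  have z1 : |z.1| ≤ ‖z‖ := norm_fst_le z
  have z2 : |z.2| ≤ ‖z‖ := norm_snd_le z
  have hz := norm_nonneg z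
  have hs := abs_le_jb s
  have hj : 0 ≤ jb s := zero_le_one.trans (one_le_jb s)
  rw [shearMap_apply, Prod.norm_def, max_le_iff]
  simp only [norm_div, norm_mul, Real.norm_eq_abs, abs_of_nonneg (Real.sqrt_nonneg _)]
  have hinv : |a|⁻¹ ≤ |a| + |a|⁻¹ := by linarith
  constructor
  · calc |z.1 + s * z.2| / |a| ≤ (|z.1| + |s| * |z.2|) * |a|⁻¹ := by
          rw [div_eq_mul_inv, ← abs_mul]; gcongr; exact abs_add_le _ _
      _ ≤ (‖z‖ + jb s * ‖z‖) * (|a| + |a|⁻¹) := by gcongr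
      _ = (|a| + |a|⁻¹) * ‖z‖ + jb s * (|a| + |a|⁻¹) * ‖z‖ := by ring
      _ ≤ w * ‖z‖ + w * ‖z‖ := by gcongr
      _ = 2 * w * ‖z‖ := by ring
  · calc Real.sqrt |a| * |z.2| / |a| = (Real.sqrt |a| / |a|) * |z.2| := by ring
      _ ≤ w * ‖z‖ := by
        gcongr
        exact (sqrt_abs_div_le ha).trans w4
      _ ≤ 2 * w * ‖z‖ := by nlinarith

/-- Peetre-type inequality: inverting the affine map `x ↦ A_a⁻¹ S_s⁻¹ (x − b)` costs one power of
the weight. It converts decay of `ψ` in `A_a⁻¹ S_s⁻¹ (x − b)` into decay in `x`. -/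
theorem one_add_norm_le (q : (ℝ × ℝ) × ℝ × ℝ) (ha : q.2.2 ≠ 0) (x : ℝ × ℝ) :
    1 + ‖x‖ ≤ 2 * grpWeight q * (1 + ‖shearMap q.2.1 q.2.2 (x - q.1)‖) := by
  obtain ⟨⟨b1, b2⟩, s, a⟩ := q
  obtain ⟨w1, w2, w3, w4, w5⟩ := grpWeight_factors (b1 := b1) (b2 := b2) (s := s) ha
  set w := grpWeight ((b1, b2), s, a)
  simp only at ha ⊢
  have h : 0 < |a| := abs_pos.2 ha
  set y := shearMap s a (x - (b1, b2)) with hy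
  rw [shearMap_apply] at hy
  have y1 : |y.1| ≤ ‖y‖ := norm_fst_le y
  have y2 : |y.2| ≤ ‖y‖ := norm_snd_le y
  have hn := norm_nonneg y
  have hs := abs_le_jb s
  have hj : 0 ≤ jb s := zero_le_one.trans (one_le_jb s)
  have e2 : |x.2 - b2| = Real.sqrt |a| * |y.2| := by
    rw [hy]
    simp only [Prod.snd_sub, abs_div, abs_mul, abs_of_nonneg (Real.sqrt_nonneg _)]
    have := Real.mul_self_sqrt h.le
    field_simp
    rw [pow_two, this]
  have e1 : x.1 - b1 = a * y.1 - s * (x.2 - b2) := by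
    rw [hy]; simp; field_simp; ring
  have f2 : |x.2 - b2| ≤ (|a| + |a|⁻¹) * ‖y‖ := by
    rw [e2]; gcongr; exact sqrt_abs_le ha
  have f2' : |x.2 - b2| ≤ w * ‖y‖ := f2.trans (by gcongr)
  have f1 : |x.1 - b1| ≤ 2 * w * ‖y‖ := by
    rw [e1]
    calc |a * y.1 - s * (x.2 - b2)| ≤ |a| * |y.1| + |s| * |x.2 - b2| := by
          rw [← abs_mul, ← abs_mul]; exact abs_sub _ _
      _ ≤ (|a| + |a|⁻¹) * ‖y‖ + jb s * ((|a| + |a|⁻¹) * ‖y‖) := by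
          gcongr; linarith [inv_pos.2 h]
      _ = (|a| + |a|⁻¹) * ‖y‖ + jb s * (|a| + |a|⁻¹) * ‖y‖ := by ring
      _ ≤ w * ‖y‖ + w * ‖y‖ := by gcongr
      _ = 2 * w * ‖y‖ := by ring
  have g1 : |x.1| ≤ w + 2 * w * ‖y‖ := by
    have := abs_add_le (x.1 - b1) b1
    rw [sub_add_cancel] at this; linarith
  have g2 : |x.2| ≤ w + 2 * w * ‖y‖ := by
    have := abs_add_le (x.2 - b2) b2
    rw [sub_add_cancel] at this; nlinarith
  have : ‖x‖ ≤ w + 2 * w * ‖y‖ := max_le g1 g2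
  linarith

theorem abs_rpow_le (q : (ℝ × ℝ) × ℝ × ℝ) (ha : q.2.2 ≠ 0) :
    (|q.2.2| ^ 3)⁻¹ * |q.2.2| ^ (-(3 : ℝ)/4) ≤ grpWeight q ^ 4 := by
  obtain ⟨⟨b1, b2⟩, s, a⟩ := q
  obtain ⟨w1, w2, w3, w4, w5⟩ := grpWeight_factors (b1 := b1) (b2 := b2) (s := s) ha
  set w := grpWeight ((b1, b2), s, a)
  simp only at ha ⊢
  have h : 0 < |a| := abs_pos.2 ha
  have h1 : |a|⁻¹ ≤ w := by linarith
  have h2 : |a| ^ (-(3 : ℝ)/4) ≤ w := by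
    rw [neg_div, Real.rpow_neg h.le, ← Real.inv_rpow h.le]
    calc (|a|⁻¹) ^ ((3 : ℝ)/4) ≤ w ^ ((3 : ℝ)/4) := by gcongr
      _ ≤ w ^ (1 : ℝ) := Real.rpow_le_rpow_of_exponent_le w1 (by norm_num)
      _ = w := Real.rpow_one w
  rw [← inv_pow]
  calc (|a|⁻¹) ^ 3 * |a| ^ (-(3 : ℝ)/4) ≤ w ^ 3 * w := by gcongr
    _ = w ^ 4 := by ring

theorem ae_scale_ne_zero : ∀ᵐ q : (ℝ × ℝ) × ℝ × ℝ, q.2.2 ≠ 0 := by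
  have h : ∀ᵐ a : ℝ, a ≠ 0 := by simp [ae_iff]
  exact (Measure.quasiMeasurePreserving_snd.comp Measure.quasiMeasurePreserving_snd).ae h

/-- With `|a| + |a|⁻¹ ≥ (1 + a²)^{1/2}`, the inverse square of the weight is dominated by a tensor
product of four functions `(1 + t²)⁻¹`. -/
theorem integrable_grpWeight : Integrable (fun q : (ℝ × ℝ) × ℝ × ℝ => (grpWeight q ^ 2)⁻¹) := by
  have h := integrable_inv_one_add_sq
  have := (h.mul_prod h).mul_prod (h.mul_prod h)
  refine this.mono' (Measurable.aestronglyMeasurable ?_) ?_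
  · unfold grpWeight jb; fun_prop
  · filter_upwards [ae_scale_ne_zero] with q hq
    rw [Real.norm_of_nonneg (by positivity), ← mul_inv, ← mul_inv, ← mul_inv]
    have := jb_sq_le hq
    unfold grpWeight
    gcongr ?_⁻¹
    rw [mul_pow, mul_pow, mul_pow, jb_sq, jb_sq, jb_sq, mul_assoc (_ * _)]
    gcongr

/-! ### Measurability and bounds for the integrand -/

theorem measurable_shearMap :
    StronglyMeasurable (fun q : (ℝ × ℝ) × ℝ × ℝ => shearMap q.2.1 q.2.2) := by
  have h1 : Measurable fun q : (ℝ × ℝ) × ℝ × ℝ => (q.2.2)⁻¹ := by fun_prop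
  have h2 : Measurable fun q : (ℝ × ℝ) × ℝ × ℝ => q.2.1 / q.2.2 := by fun_prop
  have h3 : Measurable fun q : (ℝ × ℝ) × ℝ × ℝ => Real.sqrt |q.2.2| / q.2.2 := by fun_prop
  unfold shearMap
  exact ((h1.stronglyMeasurable.smul_const _).add (h2.stronglyMeasurable.smul_const _)).add
    (h3.stronglyMeasurable.smul_const _)

theorem HLocalized.aestronglyMeasurable_coef {Φ : ℝ → ℝ → ℝ → ℝ → ℂ} (hΦ : HLocalized Φ) :
    AEStronglyMeasurable (synthCoef Φ) := by
  have h1 : Measurable fun q : (ℝ × ℝ) × ℝ × ℝ =>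
      ((((|q.2.2| ^ 3)⁻¹ * |q.2.2| ^ (-(3 : ℝ)/4) : ℝ)) : ℂ) := by fun_prop
  refine h1.aestronglyMeasurable.mul ?_
  have hS : MeasurableSet {q : (ℝ × ℝ) × ℝ × ℝ | q.2.2 ≠ 0} :=
    (isOpen_ne.preimage (by fun_prop : Continuous fun q : (ℝ × ℝ) × ℝ × ℝ => q.2.2)).measurableSet
  have : ContinuousOn (fun q : (ℝ × ℝ) × ℝ × ℝ => Φ q.1.1 q.1.2 q.2.1 q.2.2)
      {q : (ℝ × ℝ) × ℝ × ℝ | q.2.2 ≠ 0} :=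
    hΦ.1.continuousOn.comp (t := {p : ℝ × ℝ × ℝ × ℝ | p.2.2.2 ≠ 0})
      (f := fun q : (ℝ × ℝ) × ℝ × ℝ => (q.1.1, q.1.2, q.2.1, q.2.2))
      (by fun_prop : Continuous _).continuousOn (fun q hq => hq)
  have := this.aestronglyMeasurable (μ := volume) hS
  rwa [Measure.restrict_eq_self_of_ae_mem (s := {q : (ℝ × ℝ) × ℝ × ℝ | q.2.2 ≠ 0})
    ae_scale_ne_zero] at this

theorem iteratedFDeriv_integrand (ψ : 𝓢(ℝ × ℝ, ℂ)) (c : ℂ) (q : (ℝ × ℝ) × ℝ × ℝ) (n : ℕ)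
    (x : ℝ × ℝ) :
    iteratedFDeriv ℝ n (fun x => c * ψ (shearMap q.2.1 q.2.2 (x - q.1))) x
      = c • (iteratedFDeriv ℝ n ψ (shearMap q.2.1 q.2.2 (x - q.1))).compContinuousLinearMap
          (fun _ => shearMap q.2.1 q.2.2) := by
  have hc : ContDiff ℝ n (ψ ∘ shearMap q.2.1 q.2.2) :=
    (ψ.smooth n).comp (ContinuousLinearMap.contDiff _)
  have hc' : ContDiff ℝ n (fun x => (ψ ∘ shearMap q.2.1 q.2.2) (x - q.1)) :=
    hc.comp (contDiff_id.sub contDiff_const)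
  have := iteratedFDeriv_const_smul_apply' (a := c) (hc'.contDiffAt (x := x))
  refine Eq.trans this ?_
  rw [iteratedFDeriv_comp_sub,
    ContinuousLinearMap.iteratedFDeriv_comp_right _ (ψ.smooth n) _ le_rfl]

theorem measurable_iteratedFDeriv_integrand (ψ : 𝓢(ℝ × ℝ, ℂ)) {Φ : ℝ → ℝ → ℝ → ℝ → ℂ}
    (hΦ : HLocalized Φ) (n : ℕ) (x : ℝ × ℝ) :
    AEStronglyMeasurable (fun q : (ℝ × ℝ) × ℝ × ℝ => iteratedFDeriv ℝ n
      (fun x => synthCoef Φ q * ψ (shearMap q.2.1 q.2.2 (x - q.1))) x) := by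
  simp only [iteratedFDeriv_integrand]
  refine hΦ.aestronglyMeasurable_coef.smul (StronglyMeasurable.aestronglyMeasurable ?_)
  have hL := measurable_shearMap
  have hy : StronglyMeasurable fun q : (ℝ × ℝ) × ℝ × ℝ => shearMap q.2.1 q.2.2 (x - q.1) := by
    have hx : StronglyMeasurable fun q : (ℝ × ℝ) × ℝ × ℝ => x - q.1 :=
      (by fun_prop : Measurable _).stronglyMeasurable
    exact (by fun_prop : Continuous fun p : (ℝ × ℝ →L[ℝ] ℝ × ℝ) × (ℝ × ℝ) => p.1 p.2
      ).comp_stronglyMeasurable (hL.prodMk hx)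
  have hD := (ψ.smooth n).continuous_iteratedFDeriv le_rfl |>.comp_stronglyMeasurable hy
  have hcont : Continuous fun p : ((ℝ × ℝ) [×n]→L[ℝ] ℂ) × (ℝ × ℝ →L[ℝ] ℝ × ℝ) =>
      p.1.compContinuousLinearMap (fun _ => p.2) := by
    have h1 : Continuous fun p : ((ℝ × ℝ) [×n]→L[ℝ] ℂ) × (ℝ × ℝ →L[ℝ] ℝ × ℝ) =>
      ContinuousMultilinearMap.compContinuousLinearMapContinuousMultilinear ℝ
        (fun _ : Fin n => ℝ × ℝ) (fun _ : Fin n => ℝ × ℝ) ℂ (fun _ => p.2) :=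
      (ContinuousMultilinearMap.cont _).comp (continuous_pi fun _ => continuous_snd)
    exact h1.clm_apply continuous_fst
  exact hcont.comp_stronglyMeasurable (hD.prodMk hL)

/-- The seminorms without derivatives give decay of `Φ` faster than any power of the weight.
Finiteness of the supremum in `shearSeminorm` is where `HLocalized` enters. -/
theorem norm_mul_grpWeight_pow_le {Φ : ℝ → ℝ → ℝ → ℝ → ℂ} (hΦ : HLocalized Φ) (K : ℕ)
    (q : (ℝ × ℝ) × ℝ × ℝ) (ha : q.2.2 ≠ 0) :
    ‖Φ q.1.1 q.1.2 q.2.1 q.2.2‖ * grpWeight q ^ K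
      ≤ 2 ^ K * shearSeminorm K K K K 0 0 0 0 Φ := by
  obtain ⟨C, hC⟩ := hΦ.2 K K K K 0 0 0 0
  have hb : BddAbove (Set.range fun q : ℝ × ℝ × ℝ × {x : ℝ // x ≠ 0} =>
      jb q.1 ^ K * jb q.2.1 ^ K * jb q.2.2.1 ^ K *
      (|q.2.2.2.1| ^ K + (|q.2.2.2.1| ^ K)⁻¹) *
      ‖shearDeriv 0 0 0 0 Φ q.1 q.2.1 q.2.2.1 q.2.2.2.1‖) := by
    refine ⟨C, ?_⟩
    rintro _ ⟨⟨b1, b2, s, a⟩, rfl⟩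
    exact hC b1 b2 s a a.2
  have h := le_ciSup hb (q.1.1, q.1.2, q.2.1, ⟨q.2.2, ha⟩)
  have hu : (|q.2.2| + |q.2.2|⁻¹) ^ K ≤ 2 ^ K * (|q.2.2| ^ K + (|q.2.2| ^ K)⁻¹) := by
    refine (add_pow_le (by positivity) (by positivity) K).trans ?_
    rw [inv_pow]
    gcongr
    · norm_num
    · omega
  have j1 := one_le_jb q.1.1
  have j2 := one_le_jb q.1.2
  have j3 := one_le_jb q.2.1
  have j1' : 0 ≤ jb q.1.1 := by linarith
  have j2' : 0 ≤ jb q.1.2 := by linarith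
  have j3' : 0 ≤ jb q.2.1 := by linarith
  calc ‖Φ q.1.1 q.1.2 q.2.1 q.2.2‖ * grpWeight q ^ K
      = jb q.1.1 ^ K * jb q.1.2 ^ K * jb q.2.1 ^ K * (|q.2.2| + |q.2.2|⁻¹) ^ K *
        ‖Φ q.1.1 q.1.2 q.2.1 q.2.2‖ := by
        rw [grpWeight, mul_pow, mul_pow, mul_pow]; ring
    _ ≤ jb q.1.1 ^ K * jb q.1.2 ^ K * jb q.2.1 ^ K *
        (2 ^ K * (|q.2.2| ^ K + (|q.2.2| ^ K)⁻¹)) * ‖Φ q.1.1 q.1.2 q.2.1 q.2.2‖ := by gcongr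
    _ = 2 ^ K * (jb q.1.1 ^ K * jb q.1.2 ^ K * jb q.2.1 ^ K *
        (|q.2.2| ^ K + (|q.2.2| ^ K)⁻¹) * ‖Φ q.1.1 q.1.2 q.2.1 q.2.2‖) := by ring
    _ ≤ _ := by
      gcongr
      exact h

theorem shearSeminorm_nonneg (Φ : ℝ → ℝ → ℝ → ℝ → ℂ) (k1 k2 l m α1 α2 β γ : ℕ) :
    0 ≤ shearSeminorm k1 k2 l m α1 α2 β γ Φ :=
  Real.iSup_nonneg fun q => by
    have := Real.sqrt_nonneg
    unfold jb; positivity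

/-- The key estimate: every `x`-derivative of the integrand of `synthOp`, times any power of
`1 + ‖x‖`, is dominated by an integrable function of `(b, s, a)`, linearly in a seminorm of `Φ`.
Of the exponent `N + n + 6`, the weights `(1 + ‖x‖) ^ N` and the `n` derivatives use `N + n`,
the factor `|a|⁻³ |a|^{-3/4}` uses `4`, and integrability uses `2`. -/
theorem integrand_bound (ψ : 𝓢(ℝ × ℝ, ℂ)) (N n K : ℕ) (hK : N + n + 6 ≤ K) :
    ∃ C : ℝ, 0 < C ∧ ∀ Φ : ℝ → ℝ → ℝ → ℝ → ℂ, HLocalized Φ →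
      ∀ q : (ℝ × ℝ) × ℝ × ℝ, q.2.2 ≠ 0 → ∀ x : ℝ × ℝ,
      (1 + ‖x‖) ^ N * ‖iteratedFDeriv ℝ n
        (fun x => synthCoef Φ q * ψ (shearMap q.2.1 q.2.2 (x - q.1))) x‖
        ≤ C * shearSeminorm K K K K 0 0 0 0 Φ * (grpWeight q ^ 2)⁻¹ := by
  obtain ⟨D, hD⟩ : ∃ D : ℝ, ∀ y, (1 + ‖y‖) ^ N * ‖iteratedFDeriv ℝ n ψ y‖ ≤ D :=
    ⟨_, fun y => one_add_le_sup_seminorm_apply (𝕜 := ℝ) (m := (N, n)) le_rfl le_rfl ψ y⟩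
  have hD0 : 0 ≤ D := le_trans (by positivity) (hD 0)
  refine ⟨2 ^ (N + n) * (D + 1) * 2 ^ K, by positivity, fun Φ hΦ q ha x => ?_⟩
  have w1 : 1 ≤ grpWeight q := (grpWeight_factors (b1 := q.1.1) (b2 := q.1.2) (s := q.2.1) ha).1
  rw [iteratedFDeriv_integrand, norm_smul]
  set w := grpWeight q with hw
  have hw0 : 0 < w := by linarith
  set y := shearMap q.2.1 q.2.2 (x - q.1)
  set P := shearSeminorm K K K K 0 0 0 0 Φ
  have h1 : (1 + ‖x‖) ^ N ≤ (2 * w * (1 + ‖y‖)) ^ N := by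
    gcongr; exact one_add_norm_le q ha x
  have h2 : ‖(iteratedFDeriv ℝ n ψ y).compContinuousLinearMap
      (fun _ => shearMap q.2.1 q.2.2)‖ ≤ ‖iteratedFDeriv ℝ n ψ y‖ * (2 * w) ^ n := by
    refine (ContinuousMultilinearMap.norm_compContinuousLinearMap_le _ _).trans ?_
    rw [Finset.prod_const, Finset.card_univ, Fintype.card_fin]
    gcongr
    exact norm_shearMap_le q ha
  have h3 : ‖synthCoef Φ q‖ ≤ w ^ 4 * ‖Φ q.1.1 q.1.2 q.2.1 q.2.2‖ := by
    rw [synthCoef, norm_mul, Complex.norm_real, Real.norm_of_nonneg (by positivity)]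
    gcongr
    exact abs_rpow_le q ha
  rw [← div_eq_mul_inv, le_div_iff₀ (by positivity)]
  calc (1 + ‖x‖) ^ N * (‖synthCoef Φ q‖ * ‖(iteratedFDeriv ℝ n ψ y).compContinuousLinearMap
      (fun _ => shearMap q.2.1 q.2.2)‖) * w ^ 2
      ≤ (2 * w * (1 + ‖y‖)) ^ N * ((w ^ 4 * ‖Φ q.1.1 q.1.2 q.2.1 q.2.2‖) *
        (‖iteratedFDeriv ℝ n ψ y‖ * (2 * w) ^ n)) * w ^ 2 := by gcongr
    _ = 2 ^ (N + n) * ((1 + ‖y‖) ^ N * ‖iteratedFDeriv ℝ n ψ y‖) *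
        (‖Φ q.1.1 q.1.2 q.2.1 q.2.2‖ * w ^ (N + n + 6)) := by
        simp only [mul_pow]; ring
    _ ≤ 2 ^ (N + n) * (D + 1) * (‖Φ q.1.1 q.1.2 q.2.1 q.2.2‖ * w ^ K) := by
        gcongr
        linarith [hD y]
    _ ≤ 2 ^ (N + n) * (D + 1) * (2 ^ K * P) := by
        refine mul_le_mul_of_nonneg_left ?_ (by positivity)
        exact norm_mul_grpWeight_pow_le hΦ K q ha
    _ = _ := by ring

/-! ### The synthesized function is a Schwartz function -/

theorem synthOp_smooth (ψ : 𝓢(ℝ × ℝ, ℂ)) {Φ : ℝ → ℝ → ℝ → ℝ → ℂ} (hΦ : HLocalized Φ) :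
    ContDiff ℝ (⊤ : ℕ∞) (synthOp ψ Φ) ∧ ∀ n x, iteratedFDeriv ℝ n (synthOp ψ Φ) x =
      ∫ q : (ℝ × ℝ) × ℝ × ℝ, iteratedFDeriv ℝ n
        (fun x => synthCoef Φ q * ψ (shearMap q.2.1 q.2.2 (x - q.1))) x := by
  rw [synthOp_eq]
  choose C _ hC using fun n => integrand_bound ψ 0 n (n + 6) (by omega)
  refine contDiff_integral_of_bound
    (B := fun n q => C n * shearSeminorm (n + 6) (n + 6) (n + 6) (n + 6) 0 0 0 0 Φ *
      (grpWeight q ^ 2)⁻¹) (.of_forall fun q => ?_)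
    (measurable_iteratedFDeriv_integrand ψ hΦ) (fun n => integrable_grpWeight.const_mul _)
    (fun n => ?_)
  · exact contDiff_const.mul ((ψ.smooth _).comp
      ((ContinuousLinearMap.contDiff _).comp (contDiff_id.sub contDiff_const)))
  · filter_upwards [ae_scale_ne_zero] with q hq x
    simpa using hC n Φ hΦ q hq x

theorem synthOp_decay (ψ : 𝓢(ℝ × ℝ, ℂ)) (N n K : ℕ) (hK : N + n + 6 ≤ K) :
    ∃ C : ℝ, 0 < C ∧ ∀ Φ : ℝ → ℝ → ℝ → ℝ → ℂ, HLocalized Φ → ∀ x : ℝ × ℝ,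
      (1 + ‖x‖) ^ N * ‖iteratedFDeriv ℝ n (synthOp ψ Φ) x‖
        ≤ C * shearSeminorm K K K K 0 0 0 0 Φ := by
  obtain ⟨C, hC0, hC⟩ := integrand_bound ψ N n K hK
  set I := ∫ q : (ℝ × ℝ) × ℝ × ℝ, (grpWeight q ^ 2)⁻¹ with hI
  have hI0 : 0 ≤ I := integral_nonneg fun q => by positivity
  refine ⟨C * (I + 1), by positivity, fun Φ hΦ x => ?_⟩
  have hP := shearSeminorm_nonneg Φ K K K K 0 0 0 0
  rw [(synthOp_smooth ψ hΦ).2, ← abs_of_nonneg (by positivity : 0 ≤ (1 + ‖x‖) ^ N),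
    ← Real.norm_eq_abs, ← norm_smul, ← integral_smul]
  refine (norm_integral_le_of_norm_le (integrable_grpWeight.const_mul
    (C * shearSeminorm K K K K 0 0 0 0 Φ)) ?_).trans ?_
  · filter_upwards [ae_scale_ne_zero] with q hq
    rw [norm_smul, Real.norm_of_nonneg (by positivity)]
    exact hC Φ hΦ q hq x
  · rw [integral_const_mul, ← hI]
    have : C * shearSeminorm K K K K 0 0 0 0 Φ * I ≤
      C * shearSeminorm K K K K 0 0 0 0 Φ * (I + 1) := by gcongr; linarith
    linarith

/-- `synthOp ψ Φ` as a Schwartz function. -/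
def synthSchwartz (ψ : 𝓢(ℝ × ℝ, ℂ)) {Φ : ℝ → ℝ → ℝ → ℝ → ℂ} (hΦ : HLocalized Φ) :
    𝓢(ℝ × ℝ, ℂ) where
  toFun := synthOp ψ Φ
  smooth' := (synthOp_smooth ψ hΦ).1
  decay' N n := by
    obtain ⟨C, _, hC⟩ := synthOp_decay ψ N n (N + n + 6) le_rfl
    refine ⟨_, fun x => le_trans ?_ (hC Φ hΦ x)⟩
    gcongr
    linarith

theorem pdx_eq_lineDeriv (f : 𝓢(ℝ × ℝ, ℂ)) :
    pdx f = (LineDeriv.lineDerivOp ((1 : ℝ), (0 : ℝ)) f : 𝓢(ℝ × ℝ, ℂ)) := by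
  ext p
  rw [SchwartzMap.lineDerivOp_apply, pdx]
  have h1 := f.differentiableAt (x := p)
  have h2 : HasDerivAt (fun t : ℝ => (t, p.2)) ((1 : ℝ), (0 : ℝ)) p.1 :=
    (hasDerivAt_id _).prodMk (hasDerivAt_const _ _)
  rw [h1.lineDeriv_eq_fderiv]
  exact (h1.hasFDerivAt.comp_hasDerivAt p.1 h2).deriv

theorem pdy_eq_lineDeriv (f : 𝓢(ℝ × ℝ, ℂ)) :
    pdy f = (LineDeriv.lineDerivOp ((0 : ℝ), (1 : ℝ)) f : 𝓢(ℝ × ℝ, ℂ)) := by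
  ext p
  rw [SchwartzMap.lineDerivOp_apply, pdy]
  have h1 := f.differentiableAt (x := p)
  have h2 : HasDerivAt (fun t : ℝ => (p.1, t)) ((0 : ℝ), (1 : ℝ)) p.2 :=
    (hasDerivAt_const _ _).prodMk (hasDerivAt_id _)
  rw [h1.lineDeriv_eq_fderiv]
  exact (h1.hasFDerivAt.comp_hasDerivAt p.2 h2).deriv

open LineDeriv in
theorem iterate_pdx (f : 𝓢(ℝ × ℝ, ℂ)) (n : ℕ) :
    pdx^[n] f = ((fun g : 𝓢(ℝ × ℝ, ℂ) => ∂_{((1 : ℝ), (0 : ℝ))} g)^[n] f : 𝓢(ℝ × ℝ, ℂ)) := by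
  induction n with
  | zero => rfl
  | succ n ih => rw [Function.iterate_succ_apply', Function.iterate_succ_apply', ih,
      pdx_eq_lineDeriv]

open LineDeriv in
theorem iterate_pdy (f : 𝓢(ℝ × ℝ, ℂ)) (n : ℕ) :
    pdy^[n] f = ((fun g : 𝓢(ℝ × ℝ, ℂ) => ∂_{((0 : ℝ), (1 : ℝ))} g)^[n] f : 𝓢(ℝ × ℝ, ℂ)) := by
  induction n with
  | zero => rfl
  | succ n ih => rw [Function.iterate_succ_apply', Function.iterate_succ_apply', ih,
      pdy_eq_lineDeriv]

open LineDeriv in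
/-- An iterated unit directional derivative of `f` is an iterated line derivative along a family of
vectors of norm at most one, hence is controlled by the full iterated derivative. -/
theorem norm_mixed_partial_le (f : 𝓢(ℝ × ℝ, ℂ)) (i j : ℕ) (x : ℝ × ℝ) :
    ‖pdx^[i] (pdy^[j] f) x‖ ≤ ‖iteratedFDeriv ℝ (i + j) f x‖ := by
  suffices h : ∃ m : Fin (i + j) → ℝ × ℝ, (∀ k, ‖m k‖ ≤ 1) ∧
      pdx^[i] (pdy^[j] f) = (∂^{m} f : 𝓢(ℝ × ℝ, ℂ)) by
    obtain ⟨m, hm, h⟩ := h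
    rw [h, SchwartzMap.iteratedLineDerivOp_eq_iteratedFDeriv]
    refine (ContinuousMultilinearMap.le_opNorm _ _).trans ?_
    exact mul_le_of_le_one_right (norm_nonneg _)
      (Finset.prod_le_one (fun _ _ => norm_nonneg _) fun k _ => hm k)
  rw [iterate_pdy]
  induction i with
  | zero =>
    rw [Nat.zero_add]
    refine ⟨fun _ => (0, 1), fun k => by simp [Prod.norm_def], ?_⟩
    rw [iteratedLineDerivOp_const_eq_iter_lineDerivOp]
    rfl
  | succ i ih =>
    rw [Nat.succ_add]
    obtain ⟨m, hm, h⟩ := ih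
    refine ⟨Fin.cons (1, 0) m, fun k => ?_, ?_⟩
    · refine Fin.cases ?_ (fun k => ?_) k
      · simp [Prod.norm_def]
      · simpa using hm k
    · rw [Function.iterate_succ_apply', h, pdx_eq_lineDeriv, iteratedLineDerivOp_succ_left]
      simp

theorem synthOp_rho_le (ψ : 𝓢(ℝ × ℝ, ℂ)) (ν : ℕ) : ∃ (K : ℕ) (C : ℝ), 0 < C ∧
    ∀ Φ : ℝ → ℝ → ℝ → ℝ → ℂ, HLocalized Φ →
      schwartzRho ν (synthOp ψ Φ) ≤ C * shearSeminorm K K K K 0 0 0 0 Φ := by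
  choose! C hC0 hC using fun (n : ℕ) (hn : n ≤ ν) =>
    synthOp_decay ψ ν n (ν + ν + 6) (by omega)
  have hpos : ∀ n ∈ Finset.range (ν + 1), 0 < C n := fun n hn =>
    hC0 n (Nat.lt_succ_iff.1 (Finset.mem_range.1 hn))
  refine ⟨ν + ν + 6, 2 ^ ν * ∑ n ∈ Finset.range (ν + 1), C n,
    mul_pos (by positivity) (Finset.sum_pos hpos ⟨0, by simp⟩), fun Φ hΦ => ?_⟩
  have : Nonempty {m : ℕ × ℕ // m.1 + m.2 ≤ ν} := ⟨⟨(0, 0), by simp⟩⟩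
  refine ciSup_le ?_
  rintro ⟨x, ⟨⟨i, j⟩, hij⟩⟩
  simp only at hij ⊢
  have h1 := norm_mixed_partial_le (synthSchwartz ψ hΦ) i j x
  have h2 : Real.sqrt (1 + x.1 ^ 2 + x.2 ^ 2) ≤ 2 * (1 + ‖x‖) := by
    have a1 : |x.1| ≤ ‖x‖ := norm_fst_le x
    have a2 : |x.2| ≤ ‖x‖ := norm_snd_le x
    rw [Real.sqrt_le_left (by positivity)]
    have b1 := sq_le_sq' (by linarith [abs_nonneg x.1]) a1
    have b2 := sq_le_sq' (by linarith [abs_nonneg x.2]) a2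
    rw [sq_abs] at b1 b2
    nlinarith [norm_nonneg x]
  have hP := shearSeminorm_nonneg Φ (ν + ν + 6) (ν + ν + 6) (ν + ν + 6) (ν + ν + 6) 0 0 0 0
  calc _ ≤ (2 * (1 + ‖x‖)) ^ ν * ‖iteratedFDeriv ℝ (i + j) (synthOp ψ Φ) x‖ := by
        gcongr
        exact h1
    _ = 2 ^ ν * ((1 + ‖x‖) ^ ν * ‖iteratedFDeriv ℝ (i + j) (synthOp ψ Φ) x‖) := by
        rw [mul_pow]; ring
    _ ≤ 2 ^ ν * (C (i + j) *
        shearSeminorm (ν + ν + 6) (ν + ν + 6) (ν + ν + 6) (ν + ν + 6) 0 0 0 0 Φ) := by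
        refine mul_le_mul_of_nonneg_left ?_ (by positivity)
        exact hC (i + j) hij Φ hΦ x
    _ ≤ 2 ^ ν * ((∑ n ∈ Finset.range (ν + 1), C n) *
        shearSeminorm (ν + ν + 6) (ν + ν + 6) (ν + ν + 6) (ν + ν + 6) 0 0 0 0 Φ) := by
        gcongr
        exact Finset.single_le_sum (fun n hn => (hpos n hn).le)
          (Finset.mem_range.2 (by omega))
    _ = _ := by ring

/-! ### Vanishing moments of the admissible vector -/

/-- Taylor remainder of `exp (iθ)`, uniform in all real `θ` and not only near `0`. -/
theorem exists_norm_exp_sub_sum_le (n : ℕ) : ∃ C : ℝ, 0 ≤ C ∧ ∀ θ : ℝ,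
    ‖Complex.exp (θ * I) - ∑ k ∈ Finset.range n, (θ * I) ^ k / (k.factorial : ℂ)‖
      ≤ C * |θ| ^ n := by
  refine ⟨Real.exp 1 + (1 + n), by positivity, fun θ => ?_⟩
  have hθ : ‖(θ : ℂ) * I‖ = |θ| := by simp
  rcases le_total |θ| 1 with h | h
  · refine (Complex.norm_exp_sub_sum_le_norm_mul_exp _ n).trans ?_
    rw [hθ, mul_comm]
    gcongr
    have : Real.exp |θ| ≤ Real.exp 1 := Real.exp_le_exp.2 h
    linarith [(Nat.cast_nonneg n : (0 : ℝ) ≤ n)]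
  · have h1 : ‖Complex.exp (θ * I)‖ ≤ |θ| ^ n := by
      rw [Complex.norm_exp_ofReal_mul_I]; exact one_le_pow₀ h
    have h2 : ‖∑ k ∈ Finset.range n, (θ * I) ^ k / (k.factorial : ℂ)‖ ≤ n * |θ| ^ n := by
      refine (norm_sum_le _ _).trans ?_
      calc _ ≤ ∑ k ∈ Finset.range n, |θ| ^ n := by
            refine Finset.sum_le_sum fun k hk => ?_
            rw [norm_div, norm_pow, hθ, Complex.norm_natCast]
            refine (div_le_self (by positivity) ?_).trans
              (pow_le_pow_right₀ h (Finset.mem_range.1 hk).le)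
            exact_mod_cast Nat.succ_le_of_lt k.factorial_pos
        _ = _ := by simp
    refine (norm_sub_le _ _).trans ?_
    have : 0 ≤ Real.exp 1 * |θ| ^ n := by positivity
    linarith

/-- Taylor expansion at `t = 0` of `t ↦ ∫ exp (i t θ(x)) f(x) dμ(x)`: its coefficients are the
moments of `f` along `θ`. -/
theorem exists_norm_fourier_sub_moments_le {X : Type*} [MeasurableSpace X] {μ : Measure X}
    {θ : X → ℝ} (hθ : Measurable θ) {f : X → ℂ}
    (hf : ∀ k : ℕ, Integrable (fun x => (θ x : ℂ) ^ k * f x) μ) (n : ℕ) :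
    ∃ C : ℝ, 0 ≤ C ∧ ∀ t : ℝ, ‖(∫ x, Complex.exp (((t * θ x : ℝ) : ℂ) * I) * f x ∂μ) -
      ∑ k ∈ Finset.range n, (t * I) ^ k / (k.factorial : ℂ) * ∫ x, (θ x : ℂ) ^ k * f x ∂μ‖
        ≤ C * |t| ^ n := by
  obtain ⟨C, hC0, hC⟩ := exists_norm_exp_sub_sum_le n
  refine ⟨C * ∫ x, ‖(θ x : ℂ) ^ n * f x‖ ∂μ,
    mul_nonneg hC0 (integral_nonneg fun _ => norm_nonneg _), fun t => ?_⟩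
  have hf0 : Integrable f μ := by simpa using hf 0
  have hE : Integrable (fun x => Complex.exp (((t * θ x : ℝ) : ℂ) * I) * f x) μ := by
    refine hf0.bdd_mul (c := 1) (Measurable.aestronglyMeasurable (by fun_prop))
      (.of_forall fun x => ?_)
    rw [Complex.norm_exp_ofReal_mul_I]
  have hS : ∀ k ∈ Finset.range n, Integrable
      (fun x => (t * I) ^ k / (k.factorial : ℂ) * ((θ x : ℂ) ^ k * f x)) μ :=
    fun k _ => (hf k).const_mul _
  simp only [← integral_const_mul]
  rw [← integral_finsetSum _ hS, ← integral_sub hE (integrable_finsetSum _ hS)]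
  rw [← integral_mul_const]
  refine norm_integral_le_of_norm_le (((hf n).norm.const_mul C).mul_const _) (.of_forall fun x => ?_)
  have e : Complex.exp (((t * θ x : ℝ) : ℂ) * I) * f x -
      ∑ k ∈ Finset.range n, (t * I) ^ k / (k.factorial : ℂ) * ((θ x : ℂ) ^ k * f x)
      = (Complex.exp (((t * θ x : ℝ) : ℂ) * I) -
        ∑ k ∈ Finset.range n, (((t * θ x : ℝ) : ℂ) * I) ^ k / (k.factorial : ℂ)) * f x := by
    rw [sub_mul, Finset.sum_mul]
    congr 1
    refine Finset.sum_congr rfl fun k _ => ?_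
    push_cast
    simp only [mul_pow]
    ring
  rw [e, norm_mul]
  calc _ ≤ C * |t * θ x| ^ n * ‖f x‖ := by gcongr; exact hC _
    _ = _ := by
      rw [norm_mul, norm_pow, Complex.norm_real, Real.norm_eq_abs, abs_mul, mul_pow]
      ring

theorem integrable_monomial_mul (ψ : 𝓢(ℝ × ℝ, ℂ)) (i j : ℕ) :
    Integrable (fun x : ℝ × ℝ => (x.1 : ℂ) ^ i * (x.2 : ℂ) ^ j * ψ x) := by
  refine (ψ.integrable_pow_mul volume (i + j)).mono' (Continuous.aestronglyMeasurable
    (by have := ψ.continuous; fun_prop)) (.of_forall fun x => ?_)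
  rw [norm_mul, norm_mul, norm_pow, norm_pow, Complex.norm_real, Complex.norm_real, pow_add]
  gcongr
  · exact norm_fst_le x
  · exact norm_snd_le x

theorem eq_zero_of_le_mul {M A : ℝ} (hM : 0 ≤ M) (h : ∀ t : ℝ, 0 < t → M ≤ A * t) : M = 0 := by
  by_contra hne
  have hp : 0 < M := lt_of_le_of_ne hM (Ne.symm hne)
  have hA : 0 < A := by have := h 1 one_pos; linarith
  have := h (M / (2 * A)) (by positivity)
  have e : A * (M / (2 * A)) = M / 2 := by field_simp
  linarith

/-- On the line through `0` with slope `v`, the Fourier transform of `ψ` at `(t, v t)` equals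
`|t|⁻¹ Fχ₁(t) φ₂(v)`, which is `O(t^N)` for every `N` since all moments of `χ₁` vanish. Hence all
its Taylor coefficients at `t = 0` vanish; these are the moments of `ψ` along `x₁ + v x₂`. -/
theorem line_moments_eq_zero (χ1 φ2 : SchwartzMap ℝ ℂ)
    (hχ1mom : ∀ m : ℕ, ∫ t : ℝ, (t : ℂ) ^ m * χ1 t = 0)
    (ψ : SchwartzMap (ℝ × ℝ) ℂ)
    (hψ : ∀ ξ1 ξ2 : ℝ, ξ1 ≠ 0 →
      FT2 (⇑ψ) (ξ1, ξ2) = ((|ξ1|⁻¹ : ℝ) : ℂ) * FT1 (⇑χ1) ξ1 * φ2 (ξ2 / ξ1)) (v : ℝ) (n : ℕ) :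
    ∫ x : ℝ × ℝ, ((x.1 : ℂ) + v * x.2) ^ n * ψ x = 0 := by
  have hInt0 : ∀ k : ℕ, Integrable (fun x : ℝ × ℝ => ((x.1 : ℂ) + v * x.2) ^ k * ψ x) := by
    intro k
    have : (fun x : ℝ × ℝ => ((x.1 : ℂ) + v * x.2) ^ k * ψ x) = fun x =>
        ∑ m ∈ Finset.range (k + 1), ((v : ℂ) ^ (k - m) * (k.choose m : ℂ)) *
          ((x.1 : ℂ) ^ m * (x.2 : ℂ) ^ (k - m) * ψ x) := by
      ext x
      rw [add_pow, Finset.sum_mul]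
      refine Finset.sum_congr rfl fun m _ => ?_
      rw [mul_pow]; ring
    rw [this]
    exact integrable_finsetSum _ fun m _ => (integrable_monomial_mul ψ _ _).const_mul _
  let θ : ℝ × ℝ → ℝ := fun x => (-2 * Real.pi) * (x.1 + v * x.2)
  have eθ : ∀ (k : ℕ) (x : ℝ × ℝ), (θ x : ℂ) ^ k * ψ x =
      (-2 * (Real.pi : ℂ)) ^ k * (((x.1 : ℂ) + v * x.2) ^ k * ψ x) := by
    intro k x
    simp only [θ]; push_cast; rw [mul_pow]; ring
  have hInt : ∀ k : ℕ, Integrable (fun x : ℝ × ℝ => (θ x : ℂ) ^ k * ψ x) := by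
    intro k
    simp only [eθ]
    exact (hInt0 k).const_mul _
  have hIntχ : ∀ k : ℕ, Integrable (fun x : ℝ => (((-2 * Real.pi) * x : ℝ) : ℂ) ^ k * χ1 x) := by
    intro k
    have h1 : Integrable (fun x : ℝ => (x : ℂ) ^ k * χ1 x) := by
      refine (χ1.integrable_pow_mul volume k).mono' (Continuous.aestronglyMeasurable
        (by have := χ1.continuous; fun_prop)) (.of_forall fun x => ?_)
      rw [norm_mul, norm_pow, Complex.norm_real]
    refine (h1.const_mul ((-2 * (Real.pi : ℂ)) ^ k)).congr (.of_forall fun x => ?_)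
    push_cast; simp only [mul_pow]; ring
  have hM : ∀ n : ℕ, ∫ x : ℝ × ℝ, (θ x : ℂ) ^ n * ψ x = 0 := by
    intro n
    induction n using Nat.strong_induction_on with
    | _ n ih =>
    obtain ⟨C, hC0, hC⟩ := exists_norm_fourier_sub_moments_le (μ := volume)
      (by fun_prop : Measurable θ) hInt (n + 1)
    obtain ⟨D, hD0, hD⟩ := exists_norm_fourier_sub_moments_le (μ := volume)
      (by fun_prop : Measurable fun x : ℝ => (-2 * Real.pi) * x) hIntχ (n + 2)
    set M := ∫ x : ℝ × ℝ, (θ x : ℂ) ^ n * ψ x with hMdef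
    rw [← norm_eq_zero]
    refine eq_zero_of_le_mul (A := n.factorial * (C + D * ‖φ2 v‖)) (norm_nonneg _) fun t ht => ?_
    have h1 := hC t
    rw [Finset.sum_range_succ, Finset.sum_eq_zero (fun k hk => by
      rw [ih k (Finset.mem_range.1 hk), mul_zero]), zero_add, ← hMdef] at h1
    have h2 := hD t
    rw [Finset.sum_eq_zero (fun k _ => by
      have : ∫ x : ℝ, (((-2 * Real.pi) * x : ℝ) : ℂ) ^ k * χ1 x = 0 := by
        have : ∀ x : ℝ, (((-2 * Real.pi) * x : ℝ) : ℂ) ^ k * χ1 x =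
            (-2 * (Real.pi : ℂ)) ^ k * ((x : ℂ) ^ k * χ1 x) := by
          intro x; push_cast; simp only [mul_pow]; ring
        simp only [this]
        rw [integral_const_mul, hχ1mom, mul_zero]
      rw [this, mul_zero]), sub_zero] at h2
    have e1 : FT2 ψ (t, v * t) = ∫ x, Complex.exp (((t * θ x : ℝ) : ℂ) * I) * ψ x := by
      refine integral_congr_ae (.of_forall fun x => ?_)
      simp only [θ]
      push_cast
      congr 2; ring
    have e2 : FT1 χ1 t = ∫ x, Complex.exp (((t * ((-2 * Real.pi) * x) : ℝ) : ℂ) * I) * χ1 x := by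
      refine integral_congr_ae (.of_forall fun x => ?_)
      push_cast
      congr 2; ring
    have h3 := hψ t (v * t) ht.ne'
    rw [← e2] at h2
    rw [← e1, h3, mul_div_cancel_right₀ _ ht.ne'] at h1
    have h4 : ‖((|t|⁻¹ : ℝ) : ℂ) * FT1 χ1 t * φ2 v‖ ≤ D * ‖φ2 v‖ * t ^ (n + 1) := by
      rw [norm_mul, norm_mul, Complex.norm_real, Real.norm_of_nonneg (by positivity)]
      rw [abs_of_pos ht] at h2 ⊢
      calc t⁻¹ * ‖FT1 χ1 t‖ * ‖φ2 v‖ ≤ t⁻¹ * (D * t ^ (n + 2)) * ‖φ2 v‖ := by gcongr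
        _ = _ := by field_simp; ring
    rw [abs_of_pos ht] at h1
    have h5 : ‖(t * I) ^ n / (n.factorial : ℂ) * M‖ ≤ (C + D * ‖φ2 v‖) * t ^ (n + 1) := by
      have := norm_sub_le (((|t|⁻¹ : ℝ) : ℂ) * FT1 χ1 t * φ2 v)
        (((|t|⁻¹ : ℝ) : ℂ) * FT1 χ1 t * φ2 v - (t * I) ^ n / (n.factorial : ℂ) * M)
      rw [sub_sub_cancel] at this
      rw [abs_of_pos ht] at this h4
      linarith
    have h6 : ‖(t * I) ^ n / (n.factorial : ℂ) * M‖ = t ^ n / n.factorial * ‖M‖ := by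
      rw [norm_mul, norm_div, norm_pow, norm_mul, Complex.norm_I, Complex.norm_real,
        Complex.norm_natCast, Real.norm_of_nonneg ht.le, mul_one]
    rw [h6] at h5
    have hn : (0 : ℝ) < n.factorial := by exact_mod_cast n.factorial_pos
    have htn : 0 < t ^ n := by positivity
    have h7 : t ^ n / n.factorial * ‖M‖ ≤
        t ^ n / n.factorial * (n.factorial * (C + D * ‖φ2 v‖) * t) := by
      refine h5.trans (le_of_eq ?_)
      field_simp
      ring
    exact le_of_mul_le_mul_left h7 (by positivity)
  have := hM n
  simp only [eθ] at this
  rw [integral_const_mul] at this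
  refine (mul_eq_zero.1 this).resolve_left (pow_ne_zero _ ?_)
  simp [Real.pi_ne_zero]

/-- By the binomial formula the moment of order `n` along `x₁ + v x₂` is a polynomial in `v` whose
coefficients are, up to binomial coefficients, the moments of total degree `n`. A polynomial
vanishing on the real line is zero. -/
theorem moments_eq_zero_of_line_moments (ψ : 𝓢(ℝ × ℝ, ℂ))
    (h : ∀ (v : ℝ) (n : ℕ), ∫ x : ℝ × ℝ, ((x.1 : ℂ) + v * x.2) ^ n * ψ x = 0) :
    VanishingMoments2 ψ := by
  rintro ⟨i, j⟩
  set M : ℕ → ℂ := fun m => ∫ x : ℝ × ℝ, (x.1 : ℂ) ^ m * (x.2 : ℂ) ^ (i + j - m) * ψ x with hM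
  -- the moments of degree `i + j` are, up to binomial factors, the coefficients of `p`
  let p : Polynomial ℂ := ∑ m ∈ Finset.range (i + j + 1),
    Polynomial.monomial (i + j - m) (((i + j).choose m : ℂ) * M m)
  have hp : ∀ v : ℝ, p.IsRoot (v : ℂ) := by
    intro v
    rw [Polynomial.IsRoot.def]
    simp only [p, Polynomial.eval_finsetSum, Polynomial.eval_monomial]
    rw [← h v (i + j)]
    have : ∀ x : ℝ × ℝ, ((x.1 : ℂ) + v * x.2) ^ (i + j) * ψ x =
        ∑ m ∈ Finset.range (i + j + 1), ((v : ℂ) ^ (i + j - m) * ((i + j).choose m : ℂ)) *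
          ((x.1 : ℂ) ^ m * (x.2 : ℂ) ^ (i + j - m) * ψ x) := by
      intro x
      rw [add_pow, Finset.sum_mul]
      refine Finset.sum_congr rfl fun m _ => ?_
      rw [mul_pow]; ring
    simp only [this]
    rw [integral_finsetSum _ fun m _ => (integrable_monomial_mul ψ _ _).const_mul _]
    refine Finset.sum_congr rfl fun m _ => ?_
    rw [integral_const_mul]; ring
  have hp0 : p = 0 := by
    refine Polynomial.eq_zero_of_infinite_isRoot p ?_
    exact (Set.infinite_range_of_injective Complex.ofReal_injective).mono
      (by rintro _ ⟨v, rfl⟩; exact hp v)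
  have hc : p.coeff j = ((i + j).choose i : ℂ) * M i := by
    simp only [p, Polynomial.finsetSum_coeff, Polynomial.coeff_monomial]
    rw [Finset.sum_eq_single_of_mem i (by simp), if_pos (by omega)]
    intro m hm hne
    rw [if_neg]
    have := Finset.mem_range.1 hm
    omega
  rw [hp0, Polynomial.coeff_zero] at hc
  have hch : ((i + j).choose i : ℂ) ≠ 0 := by
    exact_mod_cast (Nat.choose_pos (Nat.le_add_right i j)).ne'
  have := (mul_eq_zero.1 hc.symm).resolve_left hch
  simpa [hM] using this

/-! ### Vanishing moments of the synthesized function -/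

theorem integral_polynomial_mul_eq_zero (ψ : 𝓢(ℝ × ℝ, ℂ)) (h : VanishingMoments2 ψ)
    (p : MvPolynomial (Fin 2) ℂ) :
    ∫ x : ℝ × ℝ, MvPolynomial.eval ![(x.1 : ℂ), (x.2 : ℂ)] p * ψ x = 0 := by
  have : ∀ x : ℝ × ℝ, MvPolynomial.eval ![(x.1 : ℂ), (x.2 : ℂ)] p * ψ x =
      ∑ d ∈ p.support, p.coeff d * ((x.1 : ℂ) ^ d 0 * (x.2 : ℂ) ^ d 1 * ψ x) := by
    intro x
    rw [MvPolynomial.eval_eq', Finset.sum_mul]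
    refine Finset.sum_congr rfl fun d _ => ?_
    simp [Fin.prod_univ_two]; ring
  simp only [this]
  rw [integral_finsetSum _ fun d _ => (integrable_monomial_mul ψ _ _).const_mul _]
  refine Finset.sum_eq_zero fun d _ => ?_
  rw [integral_const_mul, h (d 0, d 1), mul_zero]

/-- Composition with an invertible affine map multiplies the integral by a constant, so it preserves
its vanishing. No integrability of `F` is needed. -/
theorem integral_comp_shearMap_eq_zero (s : ℝ) {a : ℝ} (ha : a ≠ 0) {F : ℝ × ℝ → ℂ}
    (hF : ∫ y, F y = 0) (b : ℝ × ℝ) : ∫ x, F (shearMap s a (x - b)) = 0 := by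
  rw [integral_sub_right_eq_self (fun x => F (shearMap s a x)) b]
  have h : 0 < Real.sqrt |a| := Real.sqrt_pos.2 (abs_pos.2 ha)
  let e : (ℝ × ℝ) ≃ₗ[ℝ] ℝ × ℝ :=
    { (shearMap s a).toLinearMap with
      invFun := fun y => (a * y.1 - s * (a / Real.sqrt |a| * y.2), a / Real.sqrt |a| * y.2)
      left_inv := fun z => by
        simp only [AddHom.toFun_eq_coe, LinearMap.coe_toAddHom, ContinuousLinearMap.coe_coe,
          shearMap_apply]
        ext <;> simp <;> field_simp
        ring
      right_inv := fun z => by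
        simp only [AddHom.toFun_eq_coe, LinearMap.coe_toAddHom, ContinuousLinearMap.coe_coe,
          shearMap_apply]
        ext <;> simp <;> field_simp }
  have hemb : MeasurableEmbedding (shearMap s a) :=
    e.toContinuousLinearEquiv.toHomeomorph.measurableEmbedding
  rw [← hemb.integral_map]
  have hdet : LinearMap.det (shearMap s a).toLinearMap ≠ 0 := e.isUnit_det'.ne_zero
  have := Measure.map_linearMap_addHaar_eq_smul_addHaar volume hdet
  rw [ContinuousLinearMap.coe_coe] at this
  rw [this, integral_smul_measure, hF, smul_zero]

/-- A monomial in `x` is a polynomial in `A_a⁻¹ S_s⁻¹ (x − b)`, so vanishing moments pass from `ψ`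
to `S_{b,s,a}ψ`. -/
theorem shearlet_moments_eq_zero (ψ : 𝓢(ℝ × ℝ, ℂ)) (h : VanishingMoments2 ψ)
    (q : (ℝ × ℝ) × ℝ × ℝ) (ha : q.2.2 ≠ 0) (i j : ℕ) :
    ∫ x : ℝ × ℝ, (x.1 : ℂ) ^ i * (x.2 : ℂ) ^ j * ψ (shearMap q.2.1 q.2.2 (x - q.1)) = 0 := by
  obtain ⟨⟨b1, b2⟩, s, a⟩ := q
  simp only at ha ⊢
  have hs : 0 < Real.sqrt |a| := Real.sqrt_pos.2 (abs_pos.2 ha)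
  set c := a / Real.sqrt |a| with hc
  -- the monomial, expressed in the variable `y = A_a⁻¹ S_s⁻¹ (x − b)`
  let p : MvPolynomial (Fin 2) ℂ :=
    (MvPolynomial.C (b1 : ℂ) + MvPolynomial.C (a : ℂ) * MvPolynomial.X 0 -
      MvPolynomial.C ((s * c : ℝ) : ℂ) * MvPolynomial.X 1) ^ i *
    (MvPolynomial.C (b2 : ℂ) + MvPolynomial.C (c : ℂ) * MvPolynomial.X 1) ^ j
  have := integral_comp_shearMap_eq_zero s ha (integral_polynomial_mul_eq_zero ψ h p) (b1, b2)
  rw [← this]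
  refine integral_congr_ae (.of_forall fun x => ?_)
  have e2 : x.2 = b2 + c * (Real.sqrt |a| * (x.2 - b2) / a) := by
    rw [hc]; field_simp; ring
  have e1 : x.1 = b1 + a * (((x.1 - b1) + s * (x.2 - b2)) / a) -
      s * c * (Real.sqrt |a| * (x.2 - b2) / a) := by
    rw [hc]; field_simp; ring
  simp only [shearMap_apply, Prod.fst_sub, Prod.snd_sub]
  congr 1
  simp only [p, map_mul, map_pow, map_add, map_sub, MvPolynomial.eval_C, MvPolynomial.eval_X,
    Matrix.cons_val_zero, Matrix.cons_val_one, Matrix.cons_val_fin_one]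
  congr 2
  · exact_mod_cast e1
  · exact_mod_cast e2

/-- Fubini reduces the moments of `S^t_ψ Φ` to those of the functions `S_{b,s,a}ψ`; the double
integral converges absolutely by `integrand_bound` with three more powers of `1 + ‖x‖`. -/
theorem synthOp_moments (ψ : 𝓢(ℝ × ℝ, ℂ)) (h : VanishingMoments2 ψ)
    {Φ : ℝ → ℝ → ℝ → ℝ → ℂ} (hΦ : HLocalized Φ) : VanishingMoments2 (synthOp ψ Φ) := by
  rintro ⟨i, j⟩
  simp only [synthOp_eq, ← integral_const_mul]
  rw [integral_integral_swap]
  · have : ∀ᵐ q : (ℝ × ℝ) × ℝ × ℝ, ∫ x : ℝ × ℝ, (x.1 : ℂ) ^ i * (x.2 : ℂ) ^ j *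
        (synthCoef Φ q * ψ (shearMap q.2.1 q.2.2 (x - q.1))) = 0 := by
      filter_upwards [ae_scale_ne_zero] with q hq
      simp only [mul_left_comm _ (synthCoef Φ q)]
      rw [integral_const_mul, shearlet_moments_eq_zero ψ h q hq, mul_zero]
    rw [integral_congr_ae this, integral_zero]
  · obtain ⟨C, hC0, hC⟩ := integrand_bound ψ (i + j + 3) 0 (i + j + 9) (by omega)
    have hx : Integrable fun x : ℝ × ℝ => (1 + ‖x‖) ^ (-3 : ℝ) :=
      integrable_one_add_norm (by simp; norm_num)
    refine (hx.mul_prod (integrable_grpWeight.const_mul (C * shearSeminorm (i + j + 9) (i + j + 9)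
      (i + j + 9) (i + j + 9) 0 0 0 0 Φ))).mono' ?_ ?_
    · have hL := measurable_shearMap
      have hy : StronglyMeasurable fun z : (ℝ × ℝ) × ((ℝ × ℝ) × ℝ × ℝ) =>
          shearMap z.2.2.1 z.2.2.2 (z.1 - z.2.1) := by
        have hx : StronglyMeasurable fun z : (ℝ × ℝ) × ((ℝ × ℝ) × ℝ × ℝ) => z.1 - z.2.1 :=
          (by fun_prop : Measurable _).stronglyMeasurable
        exact (by fun_prop : Continuous fun p : (ℝ × ℝ →L[ℝ] ℝ × ℝ) × (ℝ × ℝ) => p.1 p.2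
          ).comp_stronglyMeasurable ((hL.comp_measurable measurable_snd).prodMk hx)
      have h1 : AEStronglyMeasurable (fun z : (ℝ × ℝ) × ((ℝ × ℝ) × ℝ × ℝ) =>
          (z.1.1 : ℂ) ^ i * (z.1.2 : ℂ) ^ j) (volume.prod volume) :=
        Continuous.aestronglyMeasurable (by fun_prop)
      exact h1.mul ((hΦ.aestronglyMeasurable_coef.comp_snd).mul
        (ψ.continuous.comp_stronglyMeasurable hy).aestronglyMeasurable)
    · have hae : ∀ᵐ z : (ℝ × ℝ) × ((ℝ × ℝ) × ℝ × ℝ) ∂(volume.prod volume), z.2.2.2 ≠ 0 :=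
        Measure.quasiMeasurePreserving_snd.ae ae_scale_ne_zero
      filter_upwards [hae] with z hz
      obtain ⟨x, q⟩ := z
      have hb := hC Φ hΦ q hz x
      rw [norm_iteratedFDeriv_zero] at hb
      simp only [Function.uncurry]
      have n1 : ‖(x.1 : ℂ) ^ i * (x.2 : ℂ) ^ j‖ ≤ (1 + ‖x‖) ^ (i + j) := by
        have a1 : |x.1| ≤ 1 + ‖x‖ := (norm_fst_le x).trans (by linarith)
        have a2 : |x.2| ≤ 1 + ‖x‖ := (norm_snd_le x).trans (by linarith)
        rw [norm_mul, norm_pow, norm_pow, Complex.norm_real, Complex.norm_real, pow_add,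
          Real.norm_eq_abs, Real.norm_eq_abs]
        gcongr
      have h0 : 0 < 1 + ‖x‖ := by positivity
      rw [norm_mul, Real.rpow_neg h0.le, inv_mul_eq_div, le_div_iff₀ (by positivity)]
      refine le_trans ?_ hb
      rw [show ((3 : ℝ)) = ((3 : ℕ) : ℝ) by norm_num, Real.rpow_natCast, pow_add]
      calc _ ≤ (1 + ‖x‖) ^ (i + j) *
            ‖synthCoef Φ q * ψ (shearMap q.2.1 q.2.2 (x - q.1))‖ * (1 + ‖x‖) ^ 3 := by gcongr
        _ = _ := by ring

/-- The shearlet synthesis operator `S^t_ψ` is a continuous map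
from `𝒮(𝕊)` into the Lizorkin space `𝒮₀(ℝ²)`: it maps `𝒮(𝕊)` into `𝒮₀(ℝ²)` and
every Schwartz seminorm of `S^t_ψ Φ` is dominated by a seminorm of `Φ`. -/
theorem synthesis_continuous_into_lizorkin
    (χ1 φ2 : SchwartzMap ℝ ℂ)
    (hχ1mom : ∀ m : ℕ, ∫ t : ℝ, (t : ℂ) ^ m * χ1 t = 0)
    (ψ : SchwartzMap (ℝ × ℝ) ℂ)
    (hψ : ∀ ξ1 ξ2 : ℝ, ξ1 ≠ 0 →
      FT2 (⇑ψ) (ξ1, ξ2) = ((|ξ1|⁻¹ : ℝ) : ℂ) * FT1 (⇑χ1) ξ1 * φ2 (ξ2 / ξ1)) :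
    (∀ Φ : ℝ → ℝ → ℝ → ℝ → ℂ, HLocalized Φ →
      ∃ g : SchwartzMap (ℝ × ℝ) ℂ, ⇑g = synthOp (⇑ψ) Φ ∧ VanishingMoments2 (⇑g)) ∧
    ∀ ν : ℕ, ∃ (k1 k2 l m α1 α2 β γ : ℕ) (C : ℝ), 0 < C ∧
      ∀ Φ : ℝ → ℝ → ℝ → ℝ → ℂ, HLocalized Φ →
        schwartzRho ν (synthOp (⇑ψ) Φ) ≤
          C * shearSeminorm k1 k2 l m α1 α2 β γ Φ := by
  refine ⟨fun Φ hΦ => ⟨synthSchwartz ψ hΦ, rfl, synthOp_moments ψ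
    (moments_eq_zero_of_line_moments ψ (line_moments_eq_zero χ1 φ2 hχ1mom ψ hψ)) hΦ⟩, fun ν => ?_⟩
  obtain ⟨K, C, hC0, hC⟩ := synthOp_rho_le ψ ν
  exact ⟨K, K, K, K, 0, 0, 0, 0, C, hC0, hC⟩

end
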